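/- For every real ε > 0 there exists k₀ = k₀(ε) such that for every integer k ≥ k₀ and every real r with 0 < r < 2^(k-1)·ln 2 − (1 + ln 2)/2 − ε: setting m = ⌊rn⌋, the fraction of sequences F of m ordered k-clauses on n variables (out of all (2n)^(km) such sequences) that are NAE-satisfiable has lim inf strictly greater than 0 as n → ∞. -/

import Mathlib

namespace NAE
open Finset

noncomputable def e {n : ℕ} (σ : Fin n → Bool) (l : Fin n × Bool) : ℝ := if σ l.1 = l.2 then 1 else 0

noncomputable def I {n k : ℕ} (σ : Fin n → Bool) (c : Fin k → Fin n × Bool) : ℝ :=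
  1 - ∏ j, e σ (c j) - ∏ j, (1 - e σ (c j))

lemma prod_e {n k : ℕ} (σ : Fin n → Bool) (c : Fin k → Fin n × Bool) :
    ∏ j, e σ (c j) = if ∀ j, σ (c j).1 = (c j).2 then 1 else 0 := by
  unfold e
  rw [Fintype.prod_ite_zero]; simp

lemma prod_e' {n k : ℕ} (σ : Fin n → Bool) (c : Fin k → Fin n × Bool) :
    ∏ j, (1 - e σ (c j)) = if ∀ j, σ (c j).1 ≠ (c j).2 then 1 else 0 := by
  have : ∀ j, (1 - e σ (c j)) = if σ (c j).1 ≠ (c j).2 then 1 else 0 := by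
    intro j; unfold e; split_ifs <;> simp_all
  simp_rw [this]
  rw [Fintype.prod_ite_zero]; simp

lemma I_eq {n k : ℕ} (hk : 0 < k) (σ : Fin n → Bool) (c : Fin k → Fin n × Bool) :
    I σ c = if (∃ j, σ (c j).1 = (c j).2) ∧ (∃ j, σ (c j).1 ≠ (c j).2) then 1 else 0 := by
  unfold I
  rw [prod_e, prod_e']
  by_cases h1 : ∀ j, σ (c j).1 = (c j).2
  · have h2 : ¬ ∀ j, σ (c j).1 ≠ (c j).2 := fun h => h ⟨0, hk⟩ (h1 _)
    have h3 : ¬ (∃ j, σ (c j).1 ≠ (c j).2) := by push Not; exact h1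
    rw [if_pos h1, if_neg h2, if_neg (fun h => h3 h.2)]; norm_num
  · by_cases h2 : ∀ j, σ (c j).1 ≠ (c j).2
    · have h3 : ¬ (∃ j, σ (c j).1 = (c j).2) := by push Not; exact h2
      rw [if_neg h1, if_pos h2, if_neg (fun h => h3 h.1)]; norm_num
    · rw [if_neg h1, if_neg h2, if_pos]; · norm_num
      push Not at h1 h2; exact ⟨h2, h1⟩

lemma sum_e {n : ℕ} (σ : Fin n → Bool) : ∑ l, e σ l = n := by
  unfold e; rw [Fintype.sum_prod_type]; simp

lemma sum_one {n : ℕ} : ∑ _l : Fin n × Bool, (1:ℝ) = 2 * n := by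
  simp; ring

def ag {n : ℕ} (σ τ : Fin n → Bool) : ℕ := #{v | σ v = τ v}

lemma sum_ee {n : ℕ} (σ τ : Fin n → Bool) : ∑ l, e σ l * e τ l = ag σ τ := by
  unfold e ag; rw [Fintype.sum_prod_type]; simp [Finset.sum_boole]

lemma sum_I {n k : ℕ} (σ : Fin n → Bool) :
    ∑ c : Fin k → Fin n × Bool, I σ c = (2 * n : ℝ) ^ k - 2 * n ^ k := by
  have h1 : ∑ c : Fin k → Fin n × Bool, (1:ℝ) = (2 * n : ℝ) ^ k := by
    rw [← sum_one, Fintype.sum_pow]; simp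
  have h2 : ∑ l, (1 - e σ l) = (n:ℝ) := by rw [sum_sub_distrib, sum_e, sum_one]; ring
  unfold I
  rw [sum_sub_distrib, sum_sub_distrib, h1, ← Fintype.sum_pow (e σ), ← Fintype.sum_pow (fun l => 1 - e σ l),
    sum_e, h2]; ring

lemma sum_II {n k : ℕ} (σ τ : Fin n → Bool) :
    ∑ c : Fin k → Fin n × Bool, I σ c * I τ c
      = (2 * n : ℝ) ^ k - 4 * n ^ k + 2 * ((ag σ τ : ℝ) ^ k + (n - ag σ τ : ℝ) ^ k) := by
  have h1 : ∑ c : Fin k → Fin n × Bool, (1:ℝ) = (2 * n : ℝ) ^ k := by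
    rw [← sum_one, Fintype.sum_pow]; simp
  have h2 : ∀ σ : Fin n → Bool, ∑ l, (1 - e σ l) = (n:ℝ) := by
    intro σ; rw [sum_sub_distrib, sum_e, sum_one]; ring
  have h3 := sum_ee σ τ
  have h4 : ∑ l, e σ l * (1 - e τ l) = (n - ag σ τ : ℝ) := by
    simp_rw [mul_sub, mul_one]; rw [sum_sub_distrib, sum_e, h3]
  have h5 : ∑ l, (1 - e σ l) * e τ l = (n - ag σ τ : ℝ) := by
    simp_rw [sub_mul, one_mul]; rw [sum_sub_distrib, sum_e, h3]
  have h6 : ∑ l, (1 - e σ l) * (1 - e τ l) = (ag σ τ : ℝ) := by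
    simp_rw [mul_sub, mul_one]; rw [sum_sub_distrib, h2, h5]; ring
  have : ∀ c : Fin k → Fin n × Bool, I σ c * I τ c = 1 - ∏ j, e σ (c j) - ∏ j, (1 - e σ (c j))
      - ∏ j, e τ (c j) - ∏ j, (1 - e τ (c j)) + ∏ j, (e σ (c j) * e τ (c j))
      + ∏ j, (e σ (c j) * (1 - e τ (c j))) + ∏ j, ((1 - e σ (c j)) * e τ (c j))
      + ∏ j, ((1 - e σ (c j)) * (1 - e τ (c j))) := by
    intro c; unfold I; simp_rw [prod_mul_distrib]; ring
  simp_rw [this, sum_add_distrib, sum_sub_distrib]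
  rw [h1, ← Fintype.sum_pow (e σ), ← Fintype.sum_pow (fun l => 1 - e σ l),
    ← Fintype.sum_pow (e τ), ← Fintype.sum_pow (fun l => 1 - e τ l),
    ← Fintype.sum_pow (fun l => e σ l * e τ l), ← Fintype.sum_pow (fun l => e σ l * (1 - e τ l)),
    ← Fintype.sum_pow (fun l => (1 - e σ l) * e τ l),
    ← Fintype.sum_pow (fun l => (1 - e σ l) * (1 - e τ l)),
    sum_e, sum_e, h2, h2, h3, h4, h5, h6]; ring

lemma sum_ag {n : ℕ} (σ : Fin n → Bool) (G : ℕ → ℝ) :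
    ∑ τ, G (ag σ τ) = ∑ z ∈ range (n + 1), (n.choose z : ℝ) * G z := by
  have h := Finset.sum_powerset_apply_card (x := (univ : Finset (Fin n))) G
  simp only [card_univ, Fintype.card_fin, nsmul_eq_mul] at h
  rw [← h]
  refine Finset.sum_bij' (fun τ _ => ({v | σ v = τ v} : Finset (Fin n)))
    (fun s _ => fun v => if v ∈ s then σ v else !(σ v)) ?_ ?_ ?_ ?_ ?_
  · intros; simp
  · intros; simp
  · intro τ _; funext v
    by_cases hv : σ v = τ v
    · simp [hv]
    · simp only [mem_filter, mem_univ, true_and, hv, if_false]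
      cases h1 : σ v <;> cases h2 : τ v <;> simp_all
  · intro s _; ext v; by_cases hv : v ∈ s <;> simp [hv]
  · intros; rfl

/-- second moment -/
lemma second {n k m : ℕ} (hk : 0 < k) :
    ((2:ℝ) ^ n * ((2 * n : ℝ) ^ k - 2 * n ^ k) ^ m) ^ 2 ≤
    (Nat.card {F : Fin m → Fin k → Fin n × Bool //
              ∃ σ : Fin n → Bool, ∀ i,
                (∃ j, σ (F i j).1 = (F i j).2) ∧ (∃ j, σ (F i j).1 ≠ (F i j).2)} : ℝ) *
    (2 ^ n * ∑ z ∈ range (n + 1), (n.choose z : ℝ) *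
      ((2 * n : ℝ) ^ k - 4 * n ^ k + 2 * ((z : ℝ) ^ k + (n - z : ℝ) ^ k)) ^ m) := by
  classical
  set P : (Fin m → Fin k → Fin n × Bool) → Prop := fun F => ∃ σ : Fin n → Bool, ∀ i,
                (∃ j, σ (F i j).1 = (F i j).2) ∧ (∃ j, σ (F i j).1 ≠ (F i j).2) with hP
  set X : (Fin m → Fin k → Fin n × Bool) → ℝ := fun F => ∑ σ : Fin n → Bool, ∏ i, I σ (F i) with hX
  have hX1 : ∑ F, X F = (2:ℝ) ^ n * ((2 * n : ℝ) ^ k - 2 * n ^ k) ^ m := by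
    simp only [hX]
    rw [sum_comm]
    have : ∀ σ : Fin n → Bool, ∑ F : Fin m → Fin k → Fin n × Bool, ∏ i, I σ (F i)
        = ((2 * n : ℝ) ^ k - 2 * n ^ k) ^ m := by
      intro σ; rw [← Fintype.sum_pow (I σ), sum_I]
    simp [this]
  have hX2 : ∑ F, X F ^ 2 = 2 ^ n * ∑ z ∈ range (n + 1), (n.choose z : ℝ) *
      ((2 * n : ℝ) ^ k - 4 * n ^ k + 2 * ((z : ℝ) ^ k + (n - z : ℝ) ^ k)) ^ m := by
    simp only [hX, sq, sum_mul_sum]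
    rw [sum_comm]
    have : ∀ σ : Fin n → Bool, ∑ F : Fin m → Fin k → Fin n × Bool, ∑ τ : Fin n → Bool,
        (∏ i, I σ (F i)) * ∏ i, I τ (F i) = ∑ z ∈ range (n + 1), (n.choose z : ℝ) *
      ((2 * n : ℝ) ^ k - 4 * n ^ k + 2 * ((z : ℝ) ^ k + (n - z : ℝ) ^ k)) ^ m := by
      intro σ
      rw [sum_comm, ← sum_ag σ (fun z => ((2 * n : ℝ) ^ k - 4 * n ^ k + 2 * ((z : ℝ) ^ k + (n - z : ℝ) ^ k)) ^ m)]
      refine sum_congr rfl fun τ _ => ?_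
      simp_rw [← prod_mul_distrib]
      rw [← Fintype.sum_pow (fun c => I σ c * I τ c), sum_II]
    simp [this]
  have hs : ∑ F, (if P F then (1:ℝ) else 0) ^ 2 = (Nat.card {F // P F} : ℝ) := by
    rw [Nat.card_eq_fintype_card, Fintype.card_subtype, ← Finset.sum_boole]
    refine sum_congr rfl fun F _ => ?_
    split_ifs <;> simp
  have hXs : ∀ F, (if P F then (1:ℝ) else 0) * X F = X F := by
    intro F
    split_ifs with h
    · simp
    · rw [zero_mul]; symm
      simp only [hX]
      refine sum_eq_zero fun σ _ => ?_
      simp only [hP, not_exists, not_forall] at h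
      obtain ⟨i, hi⟩ := h σ
      refine prod_eq_zero (mem_univ i) ?_
      rw [I_eq hk, if_neg]
      exact hi
  have := Finset.sum_mul_sq_le_sq_mul_sq univ (fun F => if P F then (1:ℝ) else 0) X
  simp only [hXs, hX1, hX2, hs] at this
  exact this
end NAE
namespace NAE
open Finset

lemma sum_cosh (n : ℕ) (y : ℝ) :
    ∑ z ∈ range (n + 1), (n.choose z : ℝ) * (1/2) ^ n * Real.exp (y * (z - n / 2))
      = Real.cosh (y / 2) ^ n := by
  rw [Real.cosh_eq, add_div, add_pow]
  refine sum_congr rfl fun z hz => ?_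
  have hz' : z ≤ n := by simpa [Nat.lt_succ_iff] using hz
  obtain ⟨d, rfl⟩ := Nat.exists_eq_add_of_le hz'
  rw [Nat.add_sub_cancel_left, div_pow _ _ z, div_pow _ _ d, ← Real.exp_nat_mul, ← Real.exp_nat_mul]
  have : y * ((z:ℝ) - (z + d : ℕ) / 2) = z * (y/2) + d * (-(y/2)) := by push_cast; ring
  rw [this, Real.exp_add, one_div, inv_pow, pow_add]
  field_simp

noncomputable def J (b : ℝ) : ℝ := ∫ g : ℝ, Real.exp (-b * g ^ 2)

lemma J_pos {b : ℝ} (hb : 0 < b) : 0 < J b := by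
  unfold J; rw [integral_gaussian]; positivity

lemma shift (s g : ℝ) : Real.exp (-(1/2) * g ^ 2 + s * g)
    = Real.exp (s ^ 2 / 2) * Real.exp (-(1/2) * (g - s) ^ 2) := by
  rw [← Real.exp_add]; congr 1; ring

lemma int_shift (s : ℝ) : MeasureTheory.Integrable (fun g : ℝ => Real.exp (-(1/2) * g ^ 2 + s * g)) := by
  simp_rw [shift]
  exact ((integrable_exp_neg_mul_sq (b := 1/2) (by norm_num)).comp_sub_right s).const_mul _

lemma integral_shift (s : ℝ) : ∫ g : ℝ, Real.exp (-(1/2) * g ^ 2 + s * g)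
    = Real.exp (s ^ 2 / 2) * J (1/2) := by
  simp_rw [shift]
  rw [MeasureTheory.integral_const_mul, J,
    MeasureTheory.integral_sub_right_eq_self (fun g : ℝ => Real.exp (-(1/2) * g ^ 2)) s]

lemma gauss (n : ℕ) (hn : 0 < n) :
    ∑ z ∈ range (n + 1), (n.choose z : ℝ) * (1/2) ^ n * Real.exp (1.96 * (z - n / 2) ^ 2 / n)
      ≤ J 0.01 / J (1/2) := by
  have hn' : (0:ℝ) < n := by exact_mod_cast hn
  rw [le_div_iff₀ (J_pos (by norm_num))]
  set t : ℝ := Real.sqrt (3.92 / n) with ht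
  have ht2 : t ^ 2 = 3.92 / n := Real.sq_sqrt (by positivity)
  have h1 : ∀ z : ℕ, (n.choose z : ℝ) * (1/2) ^ n * Real.exp (1.96 * (z - n / 2) ^ 2 / n) * J (1/2)
      = ∫ g : ℝ, (n.choose z : ℝ) * (1/2) ^ n *
        Real.exp (-(1/2) * g ^ 2 + (t * (z - n / 2)) * g) := by
    intro z
    rw [MeasureTheory.integral_const_mul, integral_shift, mul_pow, ht2, mul_assoc]
    have : 3.92 / (n:ℝ) * (z - n / 2) ^ 2 / 2 = 1.96 * (z - n / 2) ^ 2 / n := by ring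
    rw [this]
  rw [sum_mul]
  simp_rw [h1]
  rw [← MeasureTheory.integral_finsetSum _ (fun z _ => (int_shift _).const_mul _), J]
  refine MeasureTheory.integral_mono (MeasureTheory.integrable_finsetSum _ (fun z _ => (int_shift _).const_mul _))
    (integrable_exp_neg_mul_sq (by norm_num)) ?_
  intro g
  simp only
  have h2 : ∑ z ∈ range (n + 1), (n.choose z : ℝ) * (1/2) ^ n *
        Real.exp (-(1/2) * g ^ 2 + (t * (z - n / 2)) * g)
      = Real.exp (-(1/2) * g ^ 2) * Real.cosh (t * g / 2) ^ n := by
    rw [← sum_cosh, mul_sum]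
    refine sum_congr rfl fun z _ => ?_
    rw [Real.exp_add]
    have : t * ((z:ℝ) - n / 2) * g = t * g * (z - n / 2) := by ring
    rw [this]; ring
  rw [h2]
  calc _ ≤ Real.exp (-(1/2) * g ^ 2) * Real.exp ((t * g / 2) ^ 2 / 2) ^ n := by
        gcongr
        exact Real.cosh_le_exp_half_sq _
    _ = _ := by
        rw [← Real.exp_nat_mul, ← Real.exp_add]
        congr 1
        rw [div_pow, mul_pow, ht2]; field_simp; ring

/-- exponential tilt sums -/
lemma tilt (n : ℕ) (A E : ℝ) (h : Real.exp (-A) ≤ E) :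
    ∑ z ∈ range (n + 1), (n.choose z : ℝ) * (Real.exp (-(n * E)) * Real.exp (-(A * z))) ≤ 1 := by
  have : ∑ z ∈ range (n + 1), (n.choose z : ℝ) * (Real.exp (-(n * E)) * Real.exp (-(A * z)))
      = Real.exp (-(n * E)) * (Real.exp (-A) + 1) ^ n := by
    rw [add_pow, mul_sum]
    refine sum_congr rfl fun z _ => ?_
    rw [← Real.exp_nat_mul, one_pow]
    have : -(A * z) = z * -A := by ring
    rw [this]; ring
  rw [this]
  calc _ ≤ Real.exp (-(n * E)) * Real.exp E ^ n := by
        gcongr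
        exact (Real.add_one_le_exp _).trans (Real.exp_le_exp.2 h)
    _ = 1 := by rw [← Real.exp_nat_mul, ← Real.exp_add]; simp

lemma tilt' (n : ℕ) (A E : ℝ) (h : Real.exp (-A) ≤ E) :
    ∑ z ∈ range (n + 1), (n.choose z : ℝ) * (Real.exp (-(n * E)) * Real.exp (-(A * (n - z)))) ≤ 1 := by
  rw [← Finset.sum_range_reflect]
  refine le_trans (le_of_eq (sum_congr rfl fun z hz => ?_)) (tilt n A E h)
  have hz' : z ≤ n := by simpa [Nat.lt_succ_iff] using hz
  have : n + 1 - 1 - z = n - z := by omega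
  rw [this, Nat.choose_symm hz', Nat.cast_sub hz']
  congr 4; ring

end NAE
namespace NAE
open Finset

lemma diff_pow_le (x : ℝ) (hx : 0 ≤ x) (hx2 : x ≤ 1/2) (k : ℕ) :
    (1/2 + x) ^ (k+1) - (1/2 - x) ^ (k+1) ≤ (k+1) * (2 * x) * (1/2 + x) ^ k := by
  induction k with
  | zero => simp; linarith
  | succ k ih =>
    have h1 : (1/2 - x) ^ (k+1) ≤ (1/2 + x) ^ (k+1) := by
      apply pow_le_pow_left₀ <;> linarith
    have h2 := mul_le_mul_of_nonneg_left ih (show 0 ≤ 1/2 + x by linarith)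
    have h3 := mul_le_mul_of_nonneg_left h1 (show 0 ≤ 2 * x by linarith)
    push_cast
    calc _ = (1/2+x) * ((1/2 + x) ^ (k+1) - (1/2 - x) ^ (k+1)) + 2 * x * (1/2-x)^(k+1) := by ring
      _ ≤ (1/2+x) * ((k+1) * (2 * x) * (1/2 + x) ^ k) + 2 * x * (1/2+x)^(k+1) := by linarith
      _ = _ := by ring

lemma D_le (x : ℝ) (hx : 0 ≤ x) (hx2 : x ≤ 1/2) (k : ℕ) :
    (1/2 + x) ^ (k+2) + (1/2 - x) ^ (k+2) - 2 * (1/2) ^ (k+2) ≤ (k+2)^2 * (1/2 + x) ^ k * x ^ 2 := by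
  induction k with
  | zero => norm_num; nlinarith
  | succ k ih =>
    have h1 := diff_pow_le x hx hx2 (k+1)
    have h2 := mul_le_mul_of_nonneg_left h1 hx
    have h4 : 0 ≤ (1/2 + x) ^ k * x^2 := by positivity
    have h5 : 0 ≤ (1/2 + x) ^ (k+1) * x^2 := by positivity
    push_cast at *
    calc _ = 1/2 * ((1/2 + x) ^ (k+2) + (1/2 - x) ^ (k+2) - 2 * (1/2) ^ (k+2))
          + x * ((1/2 + x) ^ (k+1+1) - (1/2 - x) ^ (k+1+1)) := by ring
      _ ≤ 1/2 * ((k+2)^2 * (1/2 + x) ^ k * x ^ 2)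
          + x * ((k+1+1) * (2 * x) * (1/2 + x) ^ (k+1)) := by linarith
      _ = 1/2 * ((k+2)^2 * ((1/2 + x) ^ k * x ^ 2))
          + (2*(k+2)) * ((1/2 + x) ^ (k+1) * x^2) := by ring
      _ ≤ (1/2 + x) * ((k+2)^2 * ((1/2 + x) ^ k * x ^ 2))
          + (2*(k+2)) * ((1/2 + x) ^ (k+1) * x^2) := by
          gcongr; linarith
      _ = ((k+2)^2 + 2*(k+2)) * ((1/2 + x) ^ (k+1) * x^2) := by ring
      _ ≤ ((k+1+2)^2) * ((1/2 + x) ^ (k+1) * x^2) := by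
          gcongr; nlinarith
      _ = _ := by ring

noncomputable def w (k : ℕ) : ℝ := 2 * (1/2) ^ k

structure Big (ε : ℝ) (k : ℕ) : Prop where
  h0 : 3 ≤ k
  h1 : w k * ((1 + Real.log 2)/2 + ε) ≤ 0.09
  h2 : w k ≤ 0.004
  h3 : 2 * w k * Real.log 2 ≤ ε / 4
  h4 : (k:ℝ)^2 * 0.99^(k-2) ≤ 2.8
  h5 : Real.exp (-(0.12 * k)) ≤ 0.12 / k^2
  h6 : Real.exp (w k * ((1 + Real.log 2)/2 + ε) * k + 2 / k) ≤ 1 + ε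

lemma w_pos (k : ℕ) : 0 < w k := by unfold w; positivity

open Filter Topology in
lemma big (ε : ℝ) (hε : 0 < ε) : ∃ k₀ : ℕ, ∀ k, k₀ ≤ k → Big ε k := by
  have tw : Tendsto w atTop (𝓝 0) := by
    have := (tendsto_pow_atTop_nhds_zero_of_lt_one (r := (1/2:ℝ)) (by norm_num) (by norm_num)).const_mul 2
    rw [mul_zero] at this
    exact this
  have tkw : Tendsto (fun k : ℕ => w k * ((1 + Real.log 2)/2 + ε) * k + 2 / k) atTop (𝓝 0) := by
    have a := (tendsto_pow_const_mul_const_pow_of_abs_lt_one 1 (r := (1/2:ℝ)) (by rw [abs_of_pos] <;> norm_num)).const_mul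
      (2 * ((1 + Real.log 2)/2 + ε))
    have b := tendsto_const_div_atTop_nhds_zero_nat (2:ℝ)
    have c := a.add b
    simp only [mul_zero, add_zero] at c
    refine c.congr fun k => ?_
    unfold w; ring
  have e1 := (tw.mul_const ((1 + Real.log 2)/2 + ε)).eventually_le_const (u := 0.09) (by norm_num)
  have e2 := tw.eventually_le_const (u := 0.004) (by norm_num)
  have e3 := ((tw.const_mul 2).mul_const (Real.log 2)).eventually_le_const (u := ε/4) (by simp; linarith)
  have e4 : ∀ᶠ k : ℕ in atTop, (k:ℝ)^2 * 0.99^(k-2) ≤ 2.8 := by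
    have a := (tendsto_pow_const_mul_const_pow_of_abs_lt_one 2 (r := (0.99:ℝ)) (by rw [abs_of_pos] <;> norm_num))
    have b := a.eventually_le_const (u := 2.8 * 0.99^2) (by norm_num)
    filter_upwards [b, eventually_ge_atTop 2] with k hk hk2
    obtain ⟨d, rfl⟩ := Nat.exists_eq_add_of_le hk2
    rw [Nat.add_sub_cancel_left]
    rw [pow_add] at hk
    nlinarith
  have e5 : ∀ᶠ k : ℕ in atTop, Real.exp (-(0.12 * k)) ≤ 0.12 / (k:ℝ)^2 := by
    have a := (tendsto_pow_const_mul_const_pow_of_abs_lt_one 2 (r := Real.exp (-0.12)) (by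
      rw [abs_of_pos (Real.exp_pos _), Real.exp_lt_one_iff]; norm_num))
    have b := a.eventually_le_const (u := 0.12) (by norm_num)
    filter_upwards [b, eventually_ge_atTop 1] with k hk hk2
    have : (0:ℝ) < k := by exact_mod_cast hk2
    rw [le_div_iff₀ (by positivity)]
    rw [← Real.exp_nat_mul] at hk
    have h : -(0.12 * (k:ℝ)) = k * (-0.12) := by ring
    rw [h]; linarith
  have e6 := ((Real.continuous_exp.tendsto 0).comp tkw).eventually_le_const (u := 1 + ε) (by simp [hε])
  have := (eventually_ge_atTop 3).and (e1.and (e2.and (e3.and (e4.and (e5.and e6)))))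
  obtain ⟨k₀, hk₀⟩ := eventually_atTop.1 this
  refine ⟨k₀, fun k hk => ?_⟩
  obtain ⟨a, b, c, d, e, f, g⟩ := hk₀ k hk
  exact ⟨a, b, c, d, e, f, g⟩

noncomputable def Q (k : ℕ) (α β : ℝ) : ℝ := (1 - 2 * w k + w k * (α^k + β^k)) / (1 - w k)^2

noncomputable def R (ε : ℝ) (k : ℕ) : ℝ := (w k)⁻¹ * Real.log 2 - ((1 + Real.log 2)/2 + ε)

variable {ε : ℝ} {k : ℕ} {α β : ℝ}

lemma w_le_pow (hk : 3 ≤ k) (ha : 0 ≤ α) (hb : 0 ≤ β) (hab : α + β = 1) : w k ≤ α^k + β^k := by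
  have := add_pow_le ha hb k
  rw [hab, one_pow] at this
  obtain ⟨d, rfl⟩ := Nat.exists_eq_add_of_le (show 1 ≤ k by omega)
  rw [Nat.add_sub_cancel_left] at this
  unfold w
  have h2 : (2:ℝ)^d * (1/2)^d = 1 := by rw [← mul_pow]; norm_num
  have h3 : (0:ℝ) < (1/2)^d := by positivity
  calc _ = (1/2:ℝ)^d * 1 := by ring
    _ ≤ (1/2:ℝ)^d * (2^d * (α^(1+d) + β^(1+d))) := by gcongr
    _ = (2^d * (1/2:ℝ)^d) * (α^(1+d) + β^(1+d)) := by ring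
    _ = _ := by rw [h2, one_mul]

lemma Q_eq (h : Big ε k) : Q k α β = 1 + w k * (α^k + β^k - w k) / (1 - w k)^2 := by
  have := h.h2
  have : (1 - w k) ≠ 0 := by linarith
  unfold Q; field_simp; ring

lemma one_le_Q (h : Big ε k) (ha : 0 ≤ α) (hb : 0 ≤ β) (hab : α + β = 1) : 1 ≤ Q k α β := by
  rw [Q_eq h]
  have := w_le_pow h.h0 ha hb hab
  have h2 := w_pos k
  have : 0 ≤ w k * (α^k + β^k - w k) / (1 - w k)^2 := by
    apply div_nonneg _ (sq_nonneg _)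
    apply mul_nonneg h2.le; linarith
  linarith

lemma L_eq : R ε k * w k = Real.log 2 - w k * ((1 + Real.log 2)/2 + ε) := by
  have := (w_pos k).ne'
  unfold R; field_simp

lemma pow_le_exp (ha : 0 ≤ α) (hab : α + β = 1) : α^k ≤ Real.exp (-(k * β)) := by
  have : -(k * β) = k * (-β) := by ring
  rw [this, Real.exp_nat_mul]
  apply pow_le_pow_left₀ ha
  have := Real.add_one_le_exp (-β)
  linarith

lemma mid_h (h : Big ε k) (hab : α + β = 1) (hb : 1/(2*k) ≤ β) (hle : β ≤ α) :
    α^k + β^k - w k ≤ 2.8 * (α - 1/2)^2 := by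
  have h0 := h.h0
  have hk : (0:ℝ) < k := by exact_mod_cast (by omega : 0 < k)
  have hb0 : 0 < β := lt_of_lt_of_le (by positivity) hb
  by_cases hc : 0.01 ≤ β
  · have h4 := h.h4
    obtain ⟨d, rfl⟩ := Nat.exists_eq_add_of_le' (show 2 ≤ k by omega)
    have := D_le (α - 1/2) (by linarith) (by linarith) d
    have e1 : 1/2 + (α - 1/2) = α := by ring
    have e2 : 1/2 - (α - 1/2) = β := by linarith
    rw [e1, e2] at this
    unfold w
    refine this.trans ?_
    gcongr
    refine le_trans ?_ h4
    rw [Nat.add_sub_cancel]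
    push_cast
    gcongr
    · linarith
    · linarith
  · push Not at hc
    have h1 : α^k ≤ 0.62 := by
      refine (pow_le_exp (by linarith) hab).trans ?_
      have h2 : 1/2 ≤ k * β := by
        rw [div_le_iff₀ (by positivity)] at hb; linarith
      have h3 : Real.exp (-(k*β)) ≤ Real.exp (-(1/2)) := Real.exp_le_exp.2 (by linarith)
      have h4 : Real.exp (-(1/2)) ^ 2 = Real.exp (-1) := by
        rw [← Real.exp_nat_mul]; norm_num
      have h5 := Real.exp_neg_one_lt_d9
      have h6 := Real.exp_pos (-(1/2))
      nlinarith
    have h2 : β^k ≤ β := pow_le_of_le_one hb0.le (by linarith) (by omega)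
    have h3 := w_pos k
    nlinarith

lemma mid (h : Big ε k) (hab : α + β = 1) (ha : 1/(2*k) ≤ α) (hb : 1/(2*k) ≤ β) :
    ∃ l, Q k α β ≤ Real.exp l ∧ R ε k * l ≤ 1.96 * (α - 1/2)^2 := by
  have h1 : α^k + β^k - w k ≤ 2.8 * (α - 1/2)^2 := by
    rcases le_total β α with hle | hle
    · exact mid_h h hab hb hle
    · have := mid_h h (by linarith : β + α = 1) ha hle
      have e : β - 1/2 = -(α - 1/2) := by linarith
      rw [e, neg_sq] at this
      linarith
  have hw := w_pos k
  have hw2 := h.h2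
  refine ⟨w k * (α^k + β^k - w k) / (1 - w k)^2, ?_, ?_⟩
  · rw [Q_eq h, add_comm]; exact Real.add_one_le_exp _
  · have hL := L_eq (ε := ε) (k := k)
    have h3 := h.h1
    have l1 := Real.log_two_gt_d9
    have l2 := Real.log_two_lt_d9
    have hb : R ε k * w k ≤ 0.6932 := by
      rw [hL]
      have : 0 ≤ ε / 4 := le_trans (by positivity) h.h3
      have : 0 ≤ w k * ((1 + Real.log 2)/2 + ε) := by apply mul_nonneg hw.le; linarith
      linarith
    have hb0 : 0 ≤ R ε k * w k := by rw [hL]; linarith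
    have : 0 < (1 - w k)^2 := by apply pow_pos; linarith
    rw [mul_div_assoc', div_le_iff₀ this]
    have h7 : 0.7 * (0.992:ℝ) ≤ 0.7 * (1 - w k)^2 := by nlinarith
    have hsq := sq_nonneg (α - 1/2)
    calc R ε k * (w k * (α^k + β^k - w k)) = (R ε k * w k) * (α^k + β^k - w k) := by ring
      _ ≤ (R ε k * w k) * (2.8 * (α - 1/2)^2) := by gcongr
      _ ≤ 0.6932 * (2.8 * (α - 1/2)^2) := by gcongr
      _ ≤ (0.7 * (1 - w k)^2) * (2.8 * (α - 1/2)^2) := by gcongr; linarith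
      _ = _ := by ring

noncomputable def E (ε : ℝ) (k : ℕ) : ℝ := w k / 2 + w k * ε - 2 * (w k)^2 * Real.log 2
noncomputable def A (ε : ℝ) (k : ℕ) : ℝ := R ε k * w k * (k - 2 / k)

lemma outer (h : Big ε k) (hε : 0 < ε) (ha : 0 ≤ α) (hb : 0 ≤ β) (hab : α + β = 1) :
    ∃ l, Q k α β ≤ Real.exp l ∧
      R ε k * l ≤ Real.log 2 - E ε k - R ε k * w k * (1 - α^k - β^k) := by
  have hw := w_pos k
  have hw2 := h.h2
  have l1 := Real.log_two_gt_d9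
  have hp : 0 < 1 - w k := by linarith
  have hL := L_eq (ε := ε) (k := k)
  have h1 := h.h1
  have hR : 0 ≤ R ε k := by
    have : 0 ≤ R ε k * w k := by rw [hL]; linarith
    exact nonneg_of_mul_nonneg_left this hw
  refine ⟨-Real.log (1 - w k) - w k * (1 - α^k - β^k), ?_, ?_⟩
  · rw [sub_eq_add_neg, Real.exp_add, Real.exp_neg, Real.exp_log hp]
    have h2 := Real.add_one_le_exp (-(w k * (1 - α^k - β^k)))
    have h0 := h.h0
    have ha1 : α^k ≤ α := pow_le_of_le_one ha (by linarith) (by omega)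
    have hb1 : β^k ≤ β := pow_le_of_le_one hb (by linarith) (by omega)
    have hu : 0 ≤ w k * (1 - α^k - β^k) := by apply mul_nonneg hw.le; linarith
    have e1 : Q k α β = (1 - w k)⁻¹ * (1 - w k * (1 - α^k - β^k) / (1 - w k)) := by
      unfold Q; field_simp; ring
    rw [e1]
    have e2 : w k * (1 - α^k - β^k) ≤ w k * (1 - α^k - β^k) / (1 - w k) := by
      rw [le_div_iff₀ hp]; nlinarith
    gcongr
    linarith
  · have h2 := Real.abs_log_sub_add_sum_range_le (x := w k) (by rw [abs_of_pos hw]; linarith) 2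
    rw [abs_of_pos hw] at h2
    have h3 := (abs_le.1 h2).1
    norm_num [sum_range_succ] at h3
    have h4 : w k^3 / (1 - w k) ≤ 2 * w k^3 := by
      rw [div_le_iff₀ hp]; nlinarith [pow_pos hw 3]
    have h5 : -Real.log (1 - w k) ≤ w k + w k^2/2 + 2 * w k^3 := by linarith
    have h6 := mul_le_mul_of_nonneg_left h5 hR
    have h7 : R ε k * (w k + w k^2/2 + 2 * w k^3) = (R ε k * w k) * (1 + w k/2 + 2 * w k^2) := by ring
    have h8 : (R ε k * w k) * (1 + w k/2 + 2 * w k^2) ≤ Real.log 2 - E ε k := by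
      rw [hL]; unfold E
      have : 0 ≤ w k * ((1 + Real.log 2)/2 + ε) * (w k/2 + 2 * w k^2) := by positivity
      nlinarith
    rw [mul_sub, ← mul_assoc]
    linarith

lemma u_ge (h : Big ε k) (hb : 0 ≤ β) (ha : 0 ≤ α) (hab : α + β = 1) (hb2 : β ≤ 1/(2*k)) :
    k * β - (k^2+1) * β^2 ≤ 1 - α^k - β^k := by
  have h0 := h.h0
  have hk : (3:ℝ) ≤ k := by exact_mod_cast h0
  have h1 : k * β ≤ 1/2 := by
    rw [le_div_iff₀ (by positivity)] at hb2; linarith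
  have h0' : 0 ≤ k * β := by positivity
  have h2 : α^k ≤ 1 - k * β + k^2 * β^2 := by
    refine (pow_le_exp ha hab).trans ?_
    have := Real.abs_exp_sub_one_sub_id_le (x := -(k*β)) (by rw [abs_neg, abs_of_nonneg h0']; linarith)
    have := (abs_le.1 this).2
    nlinarith
  have h3 : β^k ≤ β^2 := pow_le_pow_of_le_one hb (by linarith) (by omega)
  linarith

lemma near (h : Big ε k) (hε : 0 < ε) (hb : 0 ≤ β) (ha : 0 ≤ α) (hab : α + β = 1) (hb2 : β ≤ 1/(k:ℝ)^3) :
    ∃ l, Q k α β ≤ Real.exp l ∧ R ε k * l ≤ Real.log 2 - E ε k - A ε k * β := by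
  obtain ⟨l, hl, hl2⟩ := outer h hε ha hb hab
  refine ⟨l, hl, hl2.trans ?_⟩
  have h0 := h.h0
  have hk : (3:ℝ) ≤ k := by exact_mod_cast h0
  have hL : 0 ≤ R ε k * w k := by
    rw [L_eq]; have := h.h1; have l1 := Real.log_two_gt_d9; linarith
  have hu := u_ge h hb ha hab (hb2.trans (by
    apply one_div_le_one_div_of_le (by positivity); nlinarith [mul_pos (show (0:ℝ) < k by linarith) (show (0:ℝ) < k by linarith)]))
  unfold A
  have h1 : (k - 2/k) * β ≤ 1 - α^k - β^k := by
    refine le_trans ?_ hu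
    have : (k^2+1) * β^2 ≤ 2 / k * β := by
      calc (k^2+1) * β^2 = ((k^2+1) * β) * β := by ring
        _ ≤ ((2 * k^2) * (1/(k:ℝ)^3)) * β := by gcongr; nlinarith
        _ = _ := by field_simp
    linarith
  have := mul_le_mul_of_nonneg_left h1 hL
  linarith

lemma far (h : Big ε k) (hε : 0 < ε) (ha : 0 ≤ α) (hab : α + β = 1) (hb1 : 1/(k:ℝ)^3 ≤ β)
    (hb2 : β ≤ 1/(2*k)) :
    ∃ l, Q k α β ≤ Real.exp l ∧ R ε k * l ≤ Real.log 2 - 0.12/k^2 - 0.12 * k * β := by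
  have hb : 0 ≤ β := le_trans (by positivity) hb1
  obtain ⟨l, hl, hl2⟩ := outer h hε ha hb hab
  refine ⟨l, hl, hl2.trans ?_⟩
  have h0 := h.h0
  have hk : (3:ℝ) ≤ k := by exact_mod_cast h0
  have hw := w_pos k
  have hL : 0.6 ≤ R ε k * w k := by
    rw [L_eq]; have := h.h1; have l1 := Real.log_two_gt_d9; linarith
  have hu := u_ge h hb ha hab hb2
  have hE : 0 ≤ E ε k := by
    unfold E; have := h.h3; nlinarith
  have h1 : 0.4 * (k * β) ≤ 1 - α^k - β^k := by
    refine le_trans ?_ hu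
    have : (k^2+1) * β^2 ≤ 0.6 * (k * β) := by
      calc (k^2+1) * β^2 = ((k^2+1) * β) * β := by ring
        _ ≤ ((1.2 * k^2) * (1/(2*k))) * β := by gcongr; nlinarith
        _ = _ := by field_simp; ring
    linarith
  have h2 : 1 / k^2 ≤ k * β := by
    calc 1/(k:ℝ)^2 = k * (1/(k:ℝ)^3) := by field_simp
      _ ≤ _ := by gcongr
  have h3 : 0 ≤ k * β := by positivity
  have := mul_le_mul hL h1 (by positivity) (by linarith)
  have h4 : 0.12/(k:ℝ)^2 = 0.12 * (1/k^2) := by ring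
  rw [h4]
  linarith

lemma A_E (h : Big ε k) : Real.exp (-A ε k) ≤ E ε k := by
  have h0 := h.h0
  have hk : (3:ℝ) ≤ k := by exact_mod_cast h0
  have hw := w_pos k
  have h6 := h.h6
  have l2 := Real.log_two_lt_d9
  have hε : 0 ≤ ε := by have := h.h3; have : 0 ≤ ε / 4 := le_trans (by positivity) h.h3; linarith
  set c := w k * ((1 + Real.log 2)/2 + ε) with hc
  have hc0 : 0 ≤ c := by positivity
  have h1 : -A ε k ≤ -(k * Real.log 2) + (c * k + 2 / k) := by
    unfold A; rw [L_eq, ← hc]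
    have : 0 ≤ c * (2/k) := by positivity
    have : 0 ≤ (1 - Real.log 2) * (2/k) := by apply mul_nonneg; linarith; positivity
    nlinarith
  have h2 : Real.exp (-(k * Real.log 2)) = w k / 2 := by
    rw [Real.exp_neg, Real.exp_nat_mul, Real.exp_log (by norm_num)]
    unfold w; rw [one_div, inv_pow]; ring
  calc Real.exp (-A ε k) ≤ Real.exp (-(k * Real.log 2) + (c * k + 2 / k)) := Real.exp_le_exp.2 h1
    _ ≤ w k / 2 * (1 + ε) := by rw [Real.exp_add, h2]; gcongr
    _ ≤ E ε k := by unfold E; have := h.h3; nlinarith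

end NAE
namespace NAE
open Finset
variable {ε : ℝ} {k : ℕ} {α β : ℝ}

lemma Q_symm : Q k α β = Q k β α := by unfold Q; ring

lemma pow_bound {n m : ℕ} {q l B R : ℝ} (h1 : 1 ≤ q) (hl : q ≤ Real.exp l) (hB : R * l ≤ B)
    (hm : (m:ℝ) ≤ R * n) : q ^ m ≤ Real.exp (n * B) := by
  have hl0 : 0 ≤ l := by
    by_contra h; push Not at h
    have := Real.exp_lt_one_iff.2 h
    linarith
  calc q ^ m ≤ Real.exp l ^ m := by gcongr
    _ = Real.exp (m * l) := by rw [Real.exp_nat_mul]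
    _ ≤ _ := by
      apply Real.exp_le_exp.2
      have a := mul_le_mul_of_nonneg_right hm hl0
      have b := mul_le_mul_of_nonneg_left hB (Nat.cast_nonneg (α := ℝ) n)
      nlinarith

lemma point (h : Big ε k) (hε : 0 < ε) {n m z : ℕ} (hn : 0 < n) (hz : z ≤ n)
    (hm : (m:ℝ) ≤ R ε k * n) :
    Q k (z / n) ((n - z) / n) ^ m ≤ Real.exp (1.96 * (z - n / 2) ^ 2 / n)
      + 2 ^ n * (Real.exp (-(n * E ε k)) * Real.exp (-(A ε k * (n - z))))
      + 2 ^ n * (Real.exp (-(n * E ε k)) * Real.exp (-(A ε k * z)))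
      + 2 ^ n * (Real.exp (-(n * (0.12 / k^2))) * Real.exp (-(0.12 * k * (n - z))))
      + 2 ^ n * (Real.exp (-(n * (0.12 / k^2))) * Real.exp (-(0.12 * k * z))) := by
  have hn' : (0:ℝ) < n := by exact_mod_cast hn
  have hz' : (z:ℝ) ≤ n := by exact_mod_cast hz
  set α : ℝ := z / n with hα
  set β : ℝ := (n - z) / n with hβ
  have ha : 0 ≤ α := by positivity
  have hb : 0 ≤ β := div_nonneg (by linarith) hn'.le
  have hab : α + β = 1 := by rw [hα, hβ]; field_simp; ring
  have e1 : (n:ℝ) * α = z := by rw [hα]; field_simp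
  have e2 : (n:ℝ) * β = n - z := by rw [hβ]; field_simp
  have hQ := one_le_Q h ha hb hab
  have h2n : Real.exp (n * Real.log 2) = 2 ^ n := by
    rw [Real.exp_nat_mul, Real.exp_log (by norm_num)]
  have p1 := Real.exp_pos (1.96 * (z - n / 2) ^ 2 / n)
  have p2 : 0 < 2 ^ n * (Real.exp (-(n * E ε k)) * Real.exp (-(A ε k * (n - z)))) := by positivity
  have p3 : 0 < 2 ^ n * (Real.exp (-(n * E ε k)) * Real.exp (-(A ε k * z))) := by positivity
  have p4 : 0 < 2 ^ n * (Real.exp (-(n * (0.12 / k^2 : ℝ))) * Real.exp (-(0.12 * k * (n - z)))) := by positivity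
  have p5 : 0 < 2 ^ n * (Real.exp (-(n * (0.12 / k^2 : ℝ))) * Real.exp (-(0.12 * k * z))) := by positivity
  have conv : ∀ X Y x : ℝ, Real.exp (n * (Real.log 2 - X - Y * x)) =
      2 ^ n * (Real.exp (-(n * X)) * Real.exp (-(Y * (n * x)))) := by
    intro X Y x
    rw [← h2n, ← Real.exp_add, ← Real.exp_add]; congr 1; ring
  rcases le_total β (1/(2*k)) with c1 | c1
  · rcases le_total β (1/(k:ℝ)^3) with c2 | c2
    · obtain ⟨l, hl, hl2⟩ := near h hε hb ha hab c2
      have := pow_bound hQ hl hl2 hm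
      rw [conv, e2] at this
      linarith
    · obtain ⟨l, hl, hl2⟩ := far h hε ha hab c2 c1
      have := pow_bound hQ hl hl2 hm
      rw [conv, e2] at this
      linarith
  · rcases le_total α (1/(2*k)) with c3 | c3
    · rw [Q_symm] at hQ ⊢
      rw [add_comm] at hab
      rcases le_total α (1/(k:ℝ)^3) with c2 | c2
      · obtain ⟨l, hl, hl2⟩ := near h hε ha hb hab c2
        have := pow_bound hQ hl hl2 hm
        rw [conv, e1] at this
        linarith
      · obtain ⟨l, hl, hl2⟩ := far h hε hb hab c2 c3
        have := pow_bound hQ hl hl2 hm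
        rw [conv, e1] at this
        linarith
    · obtain ⟨l, hl, hl2⟩ := mid h hab c3 c1
      have := pow_bound hQ hl hl2 hm
      have e3 : n * (1.96 * (α - 1/2)^2) = 1.96 * (z - n / 2) ^ 2 / n := by
        rw [hα]; field_simp
      rw [e3] at this
      linarith

noncomputable def K : ℝ := J 0.01 / J (1/2) + 4

lemma K_pos : 0 < K := by
  have := J_pos (b := 0.01) (by norm_num)
  have := J_pos (b := 1/2) (by norm_num)
  unfold K; positivity

lemma sum_le (h : Big ε k) (hε : 0 < ε) {n m : ℕ} (hn : 0 < n) (hm : (m:ℝ) ≤ R ε k * n) :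
    ∑ z ∈ range (n + 1), (n.choose z : ℝ) * (1/2) ^ n * Q k (z / n) ((n - z) / n) ^ m ≤ K := by
  have h2 : ((1/2:ℝ)) ^ n * 2 ^ n = 1 := by rw [← mul_pow]; norm_num
  have t1 := gauss n hn
  have t2 := tilt n _ _ (A_E h)
  have t3 := tilt' n _ _ (A_E h)
  have t4 := tilt n _ _ h.h5
  have t5 := tilt' n _ _ h.h5
  calc _ ≤ ∑ z ∈ range (n + 1), ((n.choose z : ℝ) * (1/2) ^ n * Real.exp (1.96 * (z - n / 2) ^ 2 / n)
      + (n.choose z : ℝ) * (Real.exp (-(n * E ε k)) * Real.exp (-(A ε k * (n - z))))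
      + (n.choose z : ℝ) * (Real.exp (-(n * E ε k)) * Real.exp (-(A ε k * z)))
      + (n.choose z : ℝ) * (Real.exp (-(n * (0.12 / k^2))) * Real.exp (-(0.12 * k * (n - z))))
      + (n.choose z : ℝ) * (Real.exp (-(n * (0.12 / k^2))) * Real.exp (-(0.12 * k * z)))) := by
        refine sum_le_sum fun z hz => ?_
        have hz' : z ≤ n := by simpa [Nat.lt_succ_iff] using hz
        have := mul_le_mul_of_nonneg_left (point h hε hn hz' hm)
          (show 0 ≤ (n.choose z : ℝ) * (1/2) ^ n by positivity)
        refine this.trans (le_of_eq ?_)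
        have e : ∀ x : ℝ, (n.choose z : ℝ) * (1/2) ^ n * (2 ^ n * x) = n.choose z * x := by
          intro x
          calc _ = (n.choose z : ℝ) * ((1/2) ^ n * 2 ^ n) * x := by ring
            _ = _ := by rw [h2, mul_one]
        simp only [mul_add, e]
    _ ≤ K := by
        simp only [sum_add_distrib]
        unfold K; linarith

lemma frac (h : Big ε k) (hε : 0 < ε) {n m : ℕ} (hn : 0 < n) (hm : (m:ℝ) ≤ R ε k * n) :
    1 / K ≤ (Nat.card {F : Fin m → Fin k → Fin n × Bool //
              ∃ σ : Fin n → Bool, ∀ i,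
                (∃ j, σ (F i j).1 = (F i j).2) ∧ (∃ j, σ (F i j).1 ≠ (F i j).2)} : ℝ) /
            (2 * (n : ℝ)) ^ (k * m) := by
  have h0 := h.h0
  have hw := w_pos k
  have hw2 := h.h2
  have hp : 0 < 1 - w k := by linarith
  have hs := second (n := n) (k := k) (m := m) (by omega)
  set N : ℝ := (Nat.card {F : Fin m → Fin k → Fin n × Bool //
              ∃ σ : Fin n → Bool, ∀ i,
                (∃ j, σ (F i j).1 = (F i j).2) ∧ (∃ j, σ (F i j).1 ≠ (F i j).2)} : ℝ) with hN
  have hn' : (0:ℝ) < n := by exact_mod_cast hn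
  set T : ℝ := (2 * (n:ℝ)) ^ k with hT
  have hTp : 0 < T := by positivity
  have hnk : (n:ℝ) ^ k = T * (w k / 2) := by
    rw [hT, mul_pow]; unfold w
    have : (2:ℝ)^k * (1/2)^k = 1 := by rw [← mul_pow]; norm_num
    calc (n:ℝ)^k = 1 * n^k := by ring
      _ = (2 ^ k * (1/2)^k) * n^k := by rw [this]
      _ = _ := by ring
  have c1 : T - 2 * (n:ℝ)^k = T * (1 - w k) := by rw [hnk]; ring
  have c2 : ∀ z : ℕ, T - 4 * (n:ℝ)^k + 2 * ((z:ℝ)^k + (n - z : ℝ)^k)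
      = T * (1 - w k)^2 * Q k (z / n) ((n - z) / n) := by
    intro z
    have a : (z:ℝ)^k = (T * (w k / 2)) * (z / n)^k := by rw [← hnk, div_pow]; field_simp
    have b : (n - z:ℝ)^k = (T * (w k / 2)) * ((n - z) / n)^k := by rw [← hnk, div_pow]; field_simp
    rw [hnk, a, b]; unfold Q; field_simp; ring
  simp_rw [c1, c2] at hs
  have c3 : ∑ z ∈ range (n + 1), (n.choose z : ℝ) * (T * (1 - w k)^2 * Q k (z / n) ((n - z) / n)) ^ m
      = (T * (1 - w k)^2) ^ m * 2 ^ n *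
        ∑ z ∈ range (n + 1), (n.choose z : ℝ) * (1/2) ^ n * Q k (z / n) ((n - z) / n) ^ m := by
    rw [mul_sum]
    refine sum_congr rfl fun z _ => ?_
    have h2 : ((1/2:ℝ)) ^ n * 2 ^ n = 1 := by rw [← mul_pow]; norm_num
    rw [mul_pow]
    generalize Q k (z / n) ((n - z) / n) ^ m = q
    generalize (T * (1 - w k)^2) ^ m = g
    calc _ = 1 * ((n.choose z : ℝ) * (g * q)) := by ring
      _ = ((1/2) ^ n * 2 ^ n) * ((n.choose z : ℝ) * (g * q)) := by rw [h2]
      _ = _ := by ring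
  rw [c3] at hs
  have hSK := sum_le h hε hn hm
  set S := ∑ z ∈ range (n + 1), (n.choose z : ℝ) * (1/2) ^ n * Q k (z / n) ((n - z) / n) ^ m
  have hN0 : 0 ≤ N := by rw [hN]; positivity
  rw [pow_mul, ← hT, div_le_div_iff₀ K_pos (by positivity), one_mul]
  set G : ℝ := (2 ^ n) ^ 2 * (T ^ m * ((1 - w k) ^ m) ^ 2) with hG
  have hGp : 0 < G := by positivity
  have e1 : (2 ^ n * (T * (1 - w k)) ^ m) ^ 2 = G * T ^ m := by rw [hG, mul_pow T]; ring
  have e2 : N * (2 ^ n * ((T * (1 - w k)^2) ^ m * 2 ^ n * S)) = G * (N * S) := by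
    rw [hG, mul_pow T, ← pow_mul (1 - w k) 2 m, ← pow_mul (1 - w k) m 2, mul_comm 2 m]; ring
  rw [e1, e2] at hs
  exact (le_of_mul_le_mul_left hs hGp).trans (by gcongr)

end NAE

/-- For every `ε > 0` there is `k₀` such that for all `k ≥ k₀` and
`0 < r < 2^(k-1) ln 2 - (1 + ln 2)/2 - ε`, the fraction of sequences of `⌊rn⌋` ordered
`k`-clauses on `n` variables that are NAE-satisfiable has strictly positive lim inf
as `n → ∞`. -/
theorem nae_sat_wupp (ε : ℝ) (hε : 0 < ε) :
    ∃ k₀ : ℕ, ∀ k : ℕ, k₀ ≤ k → ∀ r : ℝ, 0 < r →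
      r < (2 : ℝ) ^ ((k : ℤ) - 1) * Real.log 2 - (1 + Real.log 2) / 2 - ε →
      0 < Filter.liminf
        (fun n : ℕ =>
          (Nat.card {F : Fin ⌊r * (n : ℝ)⌋₊ → Fin k → Fin n × Bool //
              ∃ σ : Fin n → Bool, ∀ i,
                (∃ j, σ (F i j).1 = (F i j).2) ∧ (∃ j, σ (F i j).1 ≠ (F i j).2)} : ℝ) /
            (2 * (n : ℝ)) ^ (k * ⌊r * (n : ℝ)⌋₊))
        Filter.atTop := by
  obtain ⟨k₀, hk₀⟩ := NAE.big ε hε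
  refine ⟨k₀, fun k hk r hr hrR => ?_⟩
  have h := hk₀ k hk
  have hw : (2 : ℝ) ^ ((k : ℤ) - 1) = (NAE.w k)⁻¹ := by
    unfold NAE.w
    rw [zpow_sub₀ (by norm_num), zpow_natCast, one_div, inv_pow, mul_inv, inv_inv]
    simp; ring
  have hrR' : r ≤ NAE.R ε k := by
    unfold NAE.R; rw [← hw]; linarith
  refine lt_of_lt_of_le (one_div_pos.2 NAE.K_pos) (Filter.le_liminf_of_le ?_ ?_)
  · apply Filter.IsBoundedUnder.isCoboundedUnder_ge
    refine ⟨1, Filter.eventually_map.2 (Filter.Eventually.of_forall fun n => ?_)⟩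
    apply div_le_one_of_le₀ _ (by positivity)
    refine (Nat.cast_le.2 (Nat.card_le_card_of_injective _ Subtype.val_injective)).trans (le_of_eq ?_)
    simp [pow_mul]
    ring
  · filter_upwards [Filter.eventually_gt_atTop 0] with n hn
    refine NAE.frac h hε hn ?_
    exact (Nat.floor_le (by positivity)).trans (by gcongr)
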